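/- Let P ⊆ ℝ^d be a d-dimensional simplicial reflexive polytope, F a facet of P, and v_1, v_2 ∈ 𝒱(F) with v_1 ≠ v_2. Set y_1 = n(F,v_1) and y_2 = n(F,v_2), and suppose y_1 ≠ y_2, ⟨u_F, y_1⟩ = ⟨u_F, y_2⟩ = 0, and ⟨u_F^{v_1}, y_1⟩ = ⟨u_F^{v_2}, y_2⟩ = −1. Then there is no vertex x ∈ 𝒱(P) with ⟨u_F, x⟩ = −1 and ⟨u_F^{v_1}, x⟩ = ⟨u_F^{v_2}, x⟩ = −1. -/

import Mathlib

noncomputable section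

/-- The standard inner product on `ℝ^d`. -/
def dotp {d : ℕ} (x y : Fin d → ℝ) : ℝ := ∑ i, x i * y i

/-- `x` is a point of the lattice `ℤ^d`. -/
def IsLP {d : ℕ} (x : Fin d → ℝ) : Prop := ∀ i, ∃ n : ℤ, x i = (n : ℝ)

/-- A lattice polytope: convex hull of finitely many lattice points. -/
def IsLatticePolytope {d : ℕ} (P : Set (Fin d → ℝ)) : Prop :=
  ∃ V : Finset (Fin d → ℝ), (∀ v ∈ V, IsLP v) ∧ P = convexHull ℝ (V : Set (Fin d → ℝ))

/-- The dual polytope `P* = {x | ⟨x,y⟩ ≤ 1 ∀ y ∈ P}`. -/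
def dualPolytope {d : ℕ} (P : Set (Fin d → ℝ)) : Set (Fin d → ℝ) :=
  {x | ∀ y ∈ P, dotp x y ≤ 1}

/-- `P` is a reflexive polytope: a (`d`-dimensional) lattice polytope with `0` in its
interior whose dual is again a lattice polytope. -/
def IsReflexive {d : ℕ} (P : Set (Fin d → ℝ)) : Prop :=
  IsLatticePolytope P ∧ (0 : Fin d → ℝ) ∈ interior P ∧ IsLatticePolytope (dualPolytope P)

/-- `F` is a facet of `P` with (uniquely determined) outer normal `u`, normalized by
`⟨u, F⟩ = 1` (possible since `0` is in the interior of `P`). -/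
def IsFacetNormal {d : ℕ} (P F : Set (Fin d → ℝ)) (u : Fin d → ℝ) : Prop :=
  F.Nonempty ∧ (∀ y ∈ P, dotp u y ≤ 1) ∧ F = {y ∈ P | dotp u y = 1} ∧
    Module.finrank ℝ (vectorSpan ℝ F) = d - 1

/-- `F` is a facet of `P`. -/
def IsFacet {d : ℕ} (P F : Set (Fin d → ℝ)) : Prop := ∃ u, IsFacetNormal P F u

/-- `P` is simplicial: every facet has exactly `d` vertices. -/
def IsSimplicial {d : ℕ} (P : Set (Fin d → ℝ)) : Prop :=
  ∀ F, IsFacet P F → (Set.extremePoints ℝ F).ncard = d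

/-- `F'` is the neighboring facet `N(F,w)`: a facet different from `F` containing all
vertices of `F` except `w`. -/
def NbrFacet {d : ℕ} (P F : Set (Fin d → ℝ)) (w : Fin d → ℝ) (F' : Set (Fin d → ℝ)) : Prop :=
  IsFacet P F' ∧ F' ≠ F ∧ Set.extremePoints ℝ F \ {w} ⊆ F'

/-- `v'` is the neighboring vertex `n(F,w)`: the vertex of the neighboring facet `N(F,w)`
not contained in `F`. -/
def NbrVertex {d : ℕ} (P F : Set (Fin d → ℝ)) (w v' : Fin d → ℝ) : Prop :=
  ∃ F', NbrFacet P F w F' ∧ v' ∈ Set.extremePoints ℝ F' ∧ v' ∉ F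

/-
Write `g_v` for `u_F^v`. If a facet `F` has normal `u` and `x ∈ P` satisfies `⟨g_v, x⟩ < 0`, then
tilting `u` away from `v` until the supporting hyperplane meets `P` again produces a neighboring
facet with normal `u - s g_v`; integrality of this normal at `v` forces `s ≥ 1`. Hence
`⟨u - g_v, x⟩ ≤ 1`, and in the case of equality `s = 1`. In particular `N(F, v₁)` and `N(F, v₂)`
have normals `u - g_{v₁}` and `u - g_{v₂}`. Applying the inequality to `N(F, v₁)` and `v₂`, whose
dual vector there is `g_{v₂} + ⟨g_{v₂}, y₁⟩ g_{v₁}`, the point `x` forces `⟨g_{v₂}, y₁⟩ = 0`, and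
by symmetry `⟨g_{v₁}, y₂⟩ = 0`. Then `u - g_{v₁} - g_{v₂}` is the normal of a facet with vertices
`y₁`, `y₂` and those of `F` other than `v₁`, `v₂`. This facet lies in `{⟨u, ·⟩ ≥ 0}`, yet it
contains `x`.
-/

section LinearAlgebra

variable {K V : Type*} [DivisionRing K] [AddCommGroup V] [Module K V]

theorem finrank_span_eq_finrank_vectorSpan_add_one [FiniteDimensional K V] {s : Set V}
    (hs : s.Nonempty) (f : V →ₗ[K] K) (hf : ∀ x ∈ s, f x = 1) :
    Module.finrank K (Submodule.span K s) = Module.finrank K (vectorSpan K s) + 1 := by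
  obtain ⟨p, hp⟩ := hs
  have p_ne_zero : p ≠ 0 := by
    rintro rfl
    simpa using hf 0 hp
  have vectorSpan_le_ker : vectorSpan K s ≤ LinearMap.ker f := by
    rw [vectorSpan_def, Submodule.span_le]
    rintro _ ⟨a, ha, b, hb, rfl⟩
    simp [hf a ha, hf b hb]
  have p_notMem : p ∉ vectorSpan K s := fun h => by
    simpa [hf p hp] using vectorSpan_le_ker h
  have span_eq : Submodule.span K s = vectorSpan K s ⊔ Submodule.span K {p} := by
    apply le_antisymm
    · refine Submodule.span_le.2 fun a ha => ?_
      rw [← sub_add_cancel a p]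
      exact Submodule.add_mem_sup (vsub_mem_vectorSpan K ha hp)
        (Submodule.mem_span_singleton_self p)
    · refine sup_le ?_ (Submodule.span_mono (Set.singleton_subset_iff.2 hp))
      rw [vectorSpan_def, Submodule.span_le]
      rintro _ ⟨a, ha, b, hb, rfl⟩
      exact Submodule.sub_mem _ (Submodule.subset_span ha) (Submodule.subset_span hb)
  have inf_eq_bot : vectorSpan K s ⊓ Submodule.span K {p} = ⊥ :=
    disjoint_iff.1 ((Submodule.disjoint_span_singleton' p_ne_zero).2 p_notMem)
  have := Submodule.finrank_sup_add_finrank_inf_eq (vectorSpan K s) (Submodule.span K {p})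
  rwa [inf_eq_bot, finrank_bot, add_zero, finrank_span_singleton p_ne_zero, ← span_eq] at this

theorem span_insert_sdiff_singleton_eq_top {s : Set V} {v z : V}
    (hs : Submodule.span K s = ⊤) (f : V →ₗ[K] K) (hf : ∀ w ∈ s, w ≠ v → f w = 0)
    (hz : f z ≠ 0) : Submodule.span K (insert z (s \ {v})) = ⊤ := by
  have z_notMem : z ∉ Submodule.span K (s \ {v}) := fun h =>
    hz ((Submodule.span_le (p := LinearMap.ker f)).2 (fun w hw => hf w hw.1 hw.2) h)
  have z_mem : z ∈ Submodule.span K (insert v (s \ {v})) := by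
    have : s ⊆ insert v (s \ {v}) := by simp
    exact Submodule.span_mono this (hs ▸ Submodule.mem_top)
  have v_mem := mem_span_insert_exchange z_mem z_notMem
  rw [eq_top_iff, ← hs, Submodule.span_le]
  intro w hw
  by_cases hwv : w = v
  · exact hwv ▸ v_mem
  · exact Submodule.subset_span (Or.inr ⟨hw, hwv⟩)

end LinearAlgebra

/-- The ratio test of the simplex method. -/
theorem exists_pos_sub_mul_le {ι K : Type*} [Field K] [LinearOrder K] [IsStrictOrderedRing K]
    {s : Set ι} (hs : s.Finite) {f g : ι → K} {c : K} (hf : ∀ i ∈ s, f i ≤ c)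
    (hfg : ∀ i ∈ s, g i < 0 → f i < c) (hg : ∃ i ∈ s, g i < 0) :
    ∃ t > 0, (∀ i ∈ s, f i - t * g i ≤ c) ∧ ∃ i ∈ s, g i < 0 ∧ f i - t * g i = c := by
  obtain ⟨k, ⟨hks, hgk⟩, hmin⟩ := Set.exists_min_image {i ∈ s | g i < 0}
    (fun i => (c - f i) / -g i) (hs.subset (Set.sep_subset _ _)) hg
  have ratio_pos : 0 < (c - f k) / -g k :=
    div_pos (sub_pos.2 (hfg k hks hgk)) (neg_pos.2 hgk)
  refine ⟨_, ratio_pos, fun i hi => ?_, k, hks, hgk, ?_⟩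
  · rcases lt_or_ge (g i) 0 with hgi | hgi
    · have := (le_div_iff₀ (neg_pos.2 hgi)).1 (hmin i ⟨hi, hgi⟩)
      linarith
    · linarith [hf i hi, mul_nonneg ratio_pos.le hgi]
  · have : g k ≠ 0 := hgk.ne
    field_simp
    ring

section Polytope

variable {d : ℕ} {P F F' V s : Set (Fin d → ℝ)} {a b u g h v w x y z : Fin d → ℝ} {c : ℝ}

theorem dotp_add_left : dotp (a + b) y = dotp a y + dotp b y := add_dotProduct a b y

theorem dotp_sub_left : dotp (a - b) y = dotp a y - dotp b y := sub_dotProduct a b y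

theorem dotp_smul_left : dotp (c • a) y = c * dotp a y := smul_dotProduct c a y

theorem eq_of_dotp_eqOn_of_span_eq_top (hs : Submodule.span ℝ s = ⊤)
    (hab : ∀ y ∈ s, dotp a y = dotp b y) : a = b :=
  (dotProductEquiv ℝ (Fin d)).injective (LinearMap.ext_on hs hab)

theorem dotp_le_of_mem_convexHull (hs : ∀ y ∈ s, dotp w y ≤ c) (hx : x ∈ convexHull ℝ s) :
    dotp w x ≤ c :=
  convexHull_min hs (convex_halfSpace_le (dotProductEquiv ℝ (Fin d) w).isLinear c) hx

theorem le_dotp_of_mem_convexHull (hs : ∀ y ∈ s, c ≤ dotp w y) (hx : x ∈ convexHull ℝ s) :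
    c ≤ dotp w x :=
  convexHull_min hs (convex_halfSpace_ge (dotProductEquiv ℝ (Fin d) w).isLinear c) hx

theorem IsLP.exists_int_dotp_eq (ha : IsLP a) (hb : IsLP b) : ∃ n : ℤ, dotp a b = n := by
  choose m hm using ha
  choose n hn using hb
  exact ⟨∑ i, m i * n i, by simp [dotp, hm, hn]⟩

theorem IsLatticePolytope.isLP_of_mem_extremePoints (hP : IsLatticePolytope P)
    (hx : x ∈ Set.extremePoints ℝ P) : IsLP x := by
  obtain ⟨V, hV, rfl⟩ := hP
  exact hV x (extremePoints_convexHull_subset hx)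

namespace IsFacetNormal

theorem mem_iff (hF : IsFacetNormal P F u) : x ∈ F ↔ x ∈ P ∧ dotp u x = 1 := by
  rw [hF.2.2.1, Set.mem_sep_iff]

theorem dotp_le_one (hF : IsFacetNormal P F u) (hx : x ∈ P) : dotp u x ≤ 1 := hF.2.1 x hx

theorem isExposed (hF : IsFacetNormal P F u) : IsExposed ℝ P F := by
  obtain ⟨p, hp⟩ := hF.1
  obtain ⟨hpP, hp1⟩ := hF.mem_iff.1 hp
  refine fun _ => ⟨(dotProductEquiv ℝ (Fin d) u).toContinuousLinearMap, Set.ext fun x => ?_⟩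
  change x ∈ F ↔ x ∈ P ∧ ∀ y ∈ P, dotp u y ≤ dotp u x
  rw [hF.mem_iff]
  refine and_congr_right fun hx => ⟨fun hx1 y hy => hx1 ▸ hF.dotp_le_one hy, fun hmax => ?_⟩
  exact (hF.dotp_le_one hx).antisymm (hp1 ▸ hmax p hpP)

theorem mem_extremePoints_iff (hF : IsFacetNormal P F u) :
    x ∈ Set.extremePoints ℝ F ↔ x ∈ Set.extremePoints ℝ P ∧ dotp u x = 1 := by
  rw [hF.isExposed.isExtreme.extremePoints_eq, Set.mem_inter_iff, hF.mem_iff]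
  exact ⟨fun hx => ⟨hx.2, hx.1.2⟩, fun hx => ⟨⟨hx.1.1, hx.2⟩, hx.1⟩⟩

theorem finite_extremePoints (hV : V.Finite) (hF : IsFacetNormal (convexHull ℝ V) F u) :
    (Set.extremePoints ℝ F).Finite :=
  hV.subset fun _ hx => extremePoints_convexHull_subset (hF.mem_extremePoints_iff.1 hx).1

theorem convexHull_extremePoints (hV : V.Finite) (hF : IsFacetNormal (convexHull ℝ V) F u) :
    convexHull ℝ (Set.extremePoints ℝ F) = F := by
  have hclosed := ((hF.finite_extremePoints hV).isCompact_convexHull ℝ).isClosed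
  rw [← hclosed.closure_eq]
  exact closure_convexHull_extremePoints (hF.isExposed.isCompact (hV.isCompact_convexHull ℝ))
    (hF.isExposed.convex (convex_convexHull ℝ V))

theorem span_eq_top (hF : IsFacetNormal P F u) : Submodule.span ℝ F = ⊤ := by
  have hfinrank := finrank_span_eq_finrank_vectorSpan_add_one hF.1
    (dotProductEquiv ℝ (Fin d) u) fun x hx => (hF.mem_iff.1 hx).2
  have hle := (Submodule.span ℝ F).finrank_le
  apply Submodule.eq_top_of_finrank_eq
  rw [hF.2.2.2] at hfinrank
  rw [Module.finrank_fin_fun] at hle ⊢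
  omega

theorem span_extremePoints_eq_top (hV : V.Finite) (hF : IsFacetNormal (convexHull ℝ V) F u) :
    Submodule.span ℝ (Set.extremePoints ℝ F) = ⊤ := by
  rw [eq_top_iff, ← hF.span_eq_top, Submodule.span_le]
  nth_rw 1 [← hF.convexHull_extremePoints hV]
  exact convexHull_min Submodule.subset_span (Submodule.convex _)

theorem of_span_eq_top (hs : s.Nonempty) (hspan : Submodule.span ℝ s = ⊤) (hsP : s ⊆ P)
    (hsu : ∀ y ∈ s, dotp u y = 1) (hu : ∀ y ∈ P, dotp u y ≤ 1) :
    IsFacetNormal P {y ∈ P | dotp u y = 1} u := by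
  have hsF : s ⊆ {y ∈ P | dotp u y = 1} := fun y hy => ⟨hsP hy, hsu y hy⟩
  have hspanF : Submodule.span ℝ {y ∈ P | dotp u y = 1} = ⊤ :=
    top_unique (hspan ▸ Submodule.span_mono hsF)
  have hfinrank := finrank_span_eq_finrank_vectorSpan_add_one (hs.mono hsF)
    (dotProductEquiv ℝ (Fin d) u) fun y hy => hy.2
  rw [hspanF, finrank_top, Module.finrank_fin_fun] at hfinrank
  exact ⟨hs.mono hsF, hu, rfl, by omega⟩

theorem mem_extremePoints_dualPolytope (hF : IsFacetNormal P F u) :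
    u ∈ Set.extremePoints ℝ (dualPolytope P) := by
  rw [mem_extremePoints_iff_left]
  refine ⟨hF.2.1, ?_⟩
  rintro p hp q hq ⟨α, β, hα, hβ, hαβ, rfl⟩
  refine eq_of_dotp_eqOn_of_span_eq_top hF.span_eq_top fun y hy => ?_
  obtain ⟨hyP, hy1⟩ := hF.mem_iff.1 hy
  have hpy : dotp p y ≤ 1 := hp y hyP
  have hqy : dotp q y ≤ 1 := hq y hyP
  rw [hy1]
  rw [dotp_add_left, dotp_smul_left, dotp_smul_left] at hy1
  nlinarith

theorem dotp_nonpos_of_notMem (hP : IsLatticePolytope P)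
    (hdual : IsLatticePolytope (dualPolytope P)) (hF : IsFacetNormal P F u)
    (hx : x ∈ Set.extremePoints ℝ P) (hxF : x ∉ F) : dotp u x ≤ 0 := by
  have hu := hdual.isLP_of_mem_extremePoints hF.mem_extremePoints_dualPolytope
  obtain ⟨n, hn⟩ := hu.exists_int_dotp_eq (hP.isLP_of_mem_extremePoints hx)
  have hlt : dotp u x < 1 :=
    (hF.dotp_le_one hx.1).lt_of_ne fun h => hxF (hF.mem_iff.2 ⟨hx.1, h⟩)
  rw [hn] at hlt ⊢
  norm_cast at hlt ⊢
  omega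

end IsFacetNormal

/-- `g` is the vector `u_F^v` of the basis dual to the vertices of the facet `F`. -/
def IsDualVector (F : Set (Fin d → ℝ)) (v g : Fin d → ℝ) : Prop :=
  dotp g v = 1 ∧ ∀ w ∈ Set.extremePoints ℝ F, w ≠ v → dotp g w = 0

theorem IsDualVector.dotp_nonneg (hg : IsDualVector F v g) (hV : V.Finite)
    (hF : IsFacetNormal (convexHull ℝ V) F u) (hx : x ∈ F) : 0 ≤ dotp g x := by
  rw [← hF.convexHull_extremePoints hV] at hx
  refine le_dotp_of_mem_convexHull (fun w hw => ?_) hx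
  by_cases hwv : w = v
  · exact hwv ▸ hg.1 ▸ zero_le_one
  · exact (hg.2 w hw hwv).ge

theorem IsDualVector.add_smul (hg : IsDualVector F v g) (hgy : dotp g y = -1)
    (hF' : Set.extremePoints ℝ F' = insert y (Set.extremePoints ℝ F \ {v}))
    (hh : IsDualVector F w h) (hw : w ∈ Set.extremePoints ℝ F) (hwv : w ≠ v) :
    IsDualVector F' w (h + dotp h y • g) := by
  refine ⟨?_, fun z hz hzw => ?_⟩
  · rw [dotp_add_left, dotp_smul_left, hh.1, hg.2 w hw hwv, mul_zero, add_zero]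
  rw [dotp_add_left, dotp_smul_left]
  rcases hF' ▸ hz with rfl | ⟨hzF, hzv⟩
  · rw [hgy]
    ring
  · rw [hh.2 z hzF hzw, hg.2 z hzF hzv, mul_zero, add_zero]

namespace IsFacetNormal

theorem exists_pos_isFacetNormal_sub_smul (hV : V.Finite)
    (hF : IsFacetNormal (convexHull ℝ V) F u) (hg : IsDualVector F v g)
    (hx : x ∈ convexHull ℝ V) (hgx : dotp g x < 0) :
    ∃ t > (0 : ℝ), ∃ F', IsFacetNormal (convexHull ℝ V) F' (u - t • g) := by
  have hVP : V ⊆ convexHull ℝ V := subset_convexHull ℝ V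
  have u_lt_one : ∀ y ∈ V, dotp g y < 0 → dotp u y < 1 := fun y hy hgy =>
    (hF.dotp_le_one (hVP hy)).lt_of_ne fun h =>
      hgy.not_ge (hg.dotp_nonneg hV hF (hF.mem_iff.2 ⟨hVP hy, h⟩))
  have exists_neg : ∃ y ∈ V, dotp g y < 0 := by
    by_contra! hnonneg
    exact hgx.not_ge (le_dotp_of_mem_convexHull hnonneg hx)
  obtain ⟨t, ht, hle, z, hzV, hgz, hz1⟩ := exists_pos_sub_mul_le hV
    (fun y hy => hF.dotp_le_one (hVP hy)) u_lt_one exists_neg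
  have hspan : Submodule.span ℝ (insert z (Set.extremePoints ℝ F \ {v})) = ⊤ :=
    span_insert_sdiff_singleton_eq_top (hF.span_extremePoints_eq_top hV)
      (dotProductEquiv ℝ (Fin d) g) hg.2 hgz.ne
  refine ⟨t, ht, _, of_span_eq_top (Set.insert_nonempty _ _) hspan ?_ ?_ ?_⟩
  · exact Set.insert_subset (hVP hzV) fun w hw => (hF.mem_extremePoints_iff.1 hw.1).1.1
  · rintro w (rfl | ⟨hwF, hwv⟩)
    · rwa [dotp_sub_left, dotp_smul_left]
    · rw [dotp_sub_left, dotp_smul_left, hg.2 w hwF hwv, (hF.mem_extremePoints_iff.1 hwF).2,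
        mul_zero, sub_zero]
  · refine fun y hy => dotp_le_of_mem_convexHull (fun w hw => ?_) hy
    rw [dotp_sub_left, dotp_smul_left]
    exact hle w hw

theorem exists_one_le_isFacetNormal_sub_smul (hP : IsLatticePolytope P)
    (hdual : IsLatticePolytope (dualPolytope P)) (hF : IsFacetNormal P F u)
    (hv : v ∈ Set.extremePoints ℝ F) (hg : IsDualVector F v g) (hx : x ∈ P)
    (hgx : dotp g x < 0) : ∃ t ≥ (1 : ℝ), ∃ F', IsFacetNormal P F' (u - t • g) := by
  obtain ⟨t, ht, F', hF'⟩ : ∃ t > (0 : ℝ), ∃ F', IsFacetNormal P F' (u - t • g) := by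
    obtain ⟨V, -, rfl⟩ := hP
    exact hF.exists_pos_isFacetNormal_sub_smul V.finite_toSet hg hx hgx
  obtain ⟨hvP, huv⟩ := hF.mem_extremePoints_iff.1 hv
  have dotp_v : dotp (u - t • g) v = 1 - t := by
    rw [dotp_sub_left, dotp_smul_left, huv, hg.1, mul_one]
  have v_notMem : v ∉ F' := fun h => by linarith [(hF'.mem_iff.1 h).2]
  exact ⟨t, by linarith [hF'.dotp_nonpos_of_notMem hP hdual hvP v_notMem], F', hF'⟩

theorem dotp_sub_le_one_of_neg (hP : IsLatticePolytope P)
    (hdual : IsLatticePolytope (dualPolytope P)) (hF : IsFacetNormal P F u)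
    (hv : v ∈ Set.extremePoints ℝ F) (hg : IsDualVector F v g) (hx : x ∈ P)
    (hgx : dotp g x < 0) : dotp (u - g) x ≤ 1 := by
  obtain ⟨t, ht, F', hF'⟩ := hF.exists_one_le_isFacetNormal_sub_smul hP hdual hv hg hx hgx
  have hle := hF'.dotp_le_one hx
  rw [dotp_sub_left, dotp_smul_left] at hle
  rw [dotp_sub_left]
  have : t * dotp g x ≤ dotp g x := mul_le_of_one_le_left hgx.le ht
  linarith

theorem exists_isFacetNormal_sub (hP : IsLatticePolytope P)
    (hdual : IsLatticePolytope (dualPolytope P)) (hF : IsFacetNormal P F u)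
    (hv : v ∈ Set.extremePoints ℝ F) (hg : IsDualVector F v g) (hx : x ∈ P)
    (hgx : dotp g x < 0) (hx1 : dotp (u - g) x = 1) : ∃ F', IsFacetNormal P F' (u - g) := by
  obtain ⟨t, ht, F', hF'⟩ := hF.exists_one_le_isFacetNormal_sub_smul hP hdual hv hg hx hgx
  have hle := hF'.dotp_le_one hx
  rw [dotp_sub_left, dotp_smul_left] at hle
  rw [dotp_sub_left] at hx1
  have mul_nonneg : 0 ≤ (t - 1) * dotp g x := by linarith
  obtain rfl : t = 1 := (sub_nonpos.1 (nonpos_of_mul_nonneg_left mul_nonneg hgx)).antisymm ht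
  exact ⟨F', one_smul ℝ g ▸ hF'⟩

theorem extremePoints_eq_insert_sdiff (hP : IsLatticePolytope P) (hs : IsSimplicial P)
    (hF : IsFacetNormal P F u) (hv : v ∈ Set.extremePoints ℝ F) (hg : IsDualVector F v g)
    (hF' : IsFacetNormal P F' (u - g)) (hy : y ∈ Set.extremePoints ℝ F') (hyF : y ∉ F) :
    Set.extremePoints ℝ F' = insert y (Set.extremePoints ℝ F \ {v}) := by
  have hfin : (Set.extremePoints ℝ F').Finite := by
    obtain ⟨V, -, rfl⟩ := hP
    exact hF'.finite_extremePoints V.finite_toSet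
  have hsub : insert y (Set.extremePoints ℝ F \ {v}) ⊆ Set.extremePoints ℝ F' := by
    refine Set.insert_subset hy fun w hw => hF'.mem_extremePoints_iff.2 ?_
    obtain ⟨hwP, huw⟩ := hF.mem_extremePoints_iff.1 hw.1
    exact ⟨hwP, by rw [dotp_sub_left, huw, hg.2 w hw.1 hw.2, sub_zero]⟩
  refine (Set.eq_of_subset_of_ncard_le hsub ?_ hfin).symm
  rw [Set.ncard_exchange (fun h => hyF h.1) hv, hs F ⟨u, hF⟩, hs F' ⟨_, hF'⟩]

/-- Under these hypotheses `F'` is `N(F, v)` and `y` is `n(F, v)`. -/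
theorem exists_isFacetNormal_sub_and_extremePoints_eq (hP : IsLatticePolytope P)
    (hdual : IsLatticePolytope (dualPolytope P)) (hs : IsSimplicial P)
    (hF : IsFacetNormal P F u) (hv : v ∈ Set.extremePoints ℝ F) (hg : IsDualVector F v g)
    (hy : y ∈ Set.extremePoints ℝ P) (hgy : dotp g y < 0) (hy1 : dotp (u - g) y = 1) :
    ∃ F', IsFacetNormal P F' (u - g) ∧
      Set.extremePoints ℝ F' = insert y (Set.extremePoints ℝ F \ {v}) := by
  obtain ⟨F', hF'⟩ := hF.exists_isFacetNormal_sub hP hdual hv hg hy.1 hgy hy1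
  have hyF : y ∉ F := fun h => by
    obtain ⟨V, -, rfl⟩ := hP
    exact hgy.not_ge (hg.dotp_nonneg V.finite_toSet hF h)
  have hyF' := hF'.mem_extremePoints_iff.2 ⟨hy, hy1⟩
  exact ⟨F', hF', hF.extremePoints_eq_insert_sdiff hP hs hv hg hF' hyF' hyF⟩

theorem dotp_le_dotp_of_extremePoints_eq (hP : IsLatticePolytope P)
    (hdual : IsLatticePolytope (dualPolytope P)) (hF' : IsFacetNormal P F' (u - g))
    (hE : Set.extremePoints ℝ F' = insert y (Set.extremePoints ℝ F \ {v}))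
    (hz : z ∈ Set.extremePoints ℝ P) (hzF : z ∉ F) (hzy : z ≠ y) : dotp u z ≤ dotp g z := by
  have hzF' : z ∉ F' := fun h => by
    have hzE : z ∈ Set.extremePoints ℝ F' :=
      hF'.mem_extremePoints_iff.2 ⟨hz, (hF'.mem_iff.1 h).2⟩
    rcases hE ▸ hzE with hz' | hz'
    · exact hzy hz'
    · exact hzF hz'.1.1
  have := hF'.dotp_nonpos_of_notMem hP hdual hz hzF'
  rw [dotp_sub_left] at this
  linarith

end IsFacetNormal

theorem NbrVertex.mem_extremePoints (hy : NbrVertex P F v y) : y ∈ Set.extremePoints ℝ P := by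
  obtain ⟨F', ⟨⟨w, hF'⟩, -⟩, hyF', -⟩ := hy
  exact (hF'.mem_extremePoints_iff.1 hyF').1

end Polytope

section TwoNeighbors

variable {d : ℕ} {P F : Set (Fin d → ℝ)} {u v₁ v₂ g₁ g₂ y₁ y₂ x : Fin d → ℝ}

theorem IsFacetNormal.dotp_dual_eq_zero_of_one_le (hP : IsLatticePolytope P)
    (hdual : IsLatticePolytope (dualPolytope P)) (hs : IsSimplicial P)
    (hF : IsFacetNormal P F u) (hv₁ : v₁ ∈ Set.extremePoints ℝ F)
    (hv₂ : v₂ ∈ Set.extremePoints ℝ F) (hv : v₁ ≠ v₂)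
    (hg₁ : IsDualVector F v₁ g₁) (hg₂ : IsDualVector F v₂ g₂)
    (hy₁ : y₁ ∈ Set.extremePoints ℝ P) (hy₂ : y₂ ∈ Set.extremePoints ℝ P) (hy : y₁ ≠ y₂)
    (huy₁ : dotp u y₁ = 0) (huy₂ : dotp u y₂ = 0) (hgy₁ : dotp g₁ y₁ = -1)
    (hgy₂ : dotp g₂ y₂ = -1) (hx : x ∈ P) (hgx₁ : dotp g₁ x < 0) (hgx₂ : dotp g₂ x < 0)
    (hle : 1 ≤ dotp u x - dotp g₁ x - dotp g₂ x) : dotp g₂ y₁ = 0 := by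
  obtain ⟨F₁, hF₁, hE₁⟩ := hF.exists_isFacetNormal_sub_and_extremePoints_eq hP hdual hs hv₁ hg₁
    hy₁ (by linarith) (by rw [dotp_sub_left]; linarith)
  obtain ⟨F₂, hF₂, hE₂⟩ := hF.exists_isFacetNormal_sub_and_extremePoints_eq hP hdual hs hv₂ hg₂
    hy₂ (by linarith) (by rw [dotp_sub_left]; linarith)
  have hy₁F : y₁ ∉ F := fun h => by linarith [(hF.mem_iff.1 h).2]
  have nonneg : 0 ≤ dotp g₂ y₁ :=
    huy₁ ▸ hF₂.dotp_le_dotp_of_extremePoints_eq hP hdual hE₂ hy₁ hy₁F hy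
  have hv₂F₁ : v₂ ∈ Set.extremePoints ℝ F₁ := hE₁ ▸ Or.inr ⟨hv₂, hv.symm⟩
  have dual_neg : dotp (g₂ + dotp g₂ y₁ • g₁) x < 0 := by
    rw [dotp_add_left, dotp_smul_left]
    exact add_neg_of_neg_of_nonpos hgx₂ (mul_nonpos_of_nonneg_of_nonpos nonneg hgx₁.le)
  have hbound := hF₁.dotp_sub_le_one_of_neg hP hdual hv₂F₁
    (hg₁.add_smul hgy₁ hE₁ hg₂ hv₂ hv.symm) hx dual_neg
  rw [dotp_sub_left, dotp_sub_left, dotp_add_left, dotp_smul_left] at hbound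
  have mul_nonneg : 0 ≤ dotp g₂ y₁ * dotp g₁ x := by linarith
  exact (nonpos_of_mul_nonneg_left mul_nonneg hgx₁).antisymm nonneg

theorem IsFacetNormal.exists_isFacetNormal_sub_sub_and_extremePoints_eq (hP : IsLatticePolytope P)
    (hdual : IsLatticePolytope (dualPolytope P)) (hs : IsSimplicial P)
    (hF : IsFacetNormal P F u) (hv₁ : v₁ ∈ Set.extremePoints ℝ F)
    (hv₂ : v₂ ∈ Set.extremePoints ℝ F) (hv : v₁ ≠ v₂)
    (hg₁ : IsDualVector F v₁ g₁) (hg₂ : IsDualVector F v₂ g₂)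
    (hy₁ : y₁ ∈ Set.extremePoints ℝ P) (hy₂ : y₂ ∈ Set.extremePoints ℝ P)
    (huy₁ : dotp u y₁ = 0) (huy₂ : dotp u y₂ = 0) (hgy₁ : dotp g₁ y₁ = -1)
    (hgy₂ : dotp g₂ y₂ = -1) (hg₁y₂ : dotp g₁ y₂ = 0) (hg₂y₁ : dotp g₂ y₁ = 0) :
    ∃ G, IsFacetNormal P G (u - g₁ - g₂) ∧ Set.extremePoints ℝ G =
      insert y₂ (insert y₁ (Set.extremePoints ℝ F \ {v₁, v₂})) := by
  obtain ⟨F₁, hF₁, hE₁⟩ := hF.exists_isFacetNormal_sub_and_extremePoints_eq hP hdual hs hv₁ hg₁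
    hy₁ (by linarith) (by rw [dotp_sub_left]; linarith)
  have hv₂F₁ : v₂ ∈ Set.extremePoints ℝ F₁ := hE₁ ▸ Or.inr ⟨hv₂, hv.symm⟩
  have hg₂F₁ : IsDualVector F₁ v₂ g₂ := by
    simpa only [hg₂y₁, zero_smul, add_zero] using hg₁.add_smul hgy₁ hE₁ hg₂ hv₂ hv.symm
  obtain ⟨G, hG, hEG⟩ := hF₁.exists_isFacetNormal_sub_and_extremePoints_eq hP hdual hs hv₂F₁
    hg₂F₁ hy₂ (by linarith) (by rw [dotp_sub_left, dotp_sub_left]; linarith)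
  have y₁_ne_v₂ : y₁ ≠ v₂ := by
    rintro rfl
    linarith [hg₂.1]
  exact ⟨G, hG, by rw [hEG, hE₁, ← Set.insert_sdiff_singleton_comm y₁_ne_v₂,
    Set.sdiff_sdiff, Set.singleton_union]⟩

theorem stmt14_general (hP : IsLatticePolytope P)
    (hdual : IsLatticePolytope (dualPolytope P)) (hs : IsSimplicial P)
    (hF : IsFacetNormal P F u) (hv₁ : v₁ ∈ Set.extremePoints ℝ F)
    (hv₂ : v₂ ∈ Set.extremePoints ℝ F) (hv : v₁ ≠ v₂)
    (hg₁ : IsDualVector F v₁ g₁) (hg₂ : IsDualVector F v₂ g₂)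
    (hy₁ : y₁ ∈ Set.extremePoints ℝ P) (hy₂ : y₂ ∈ Set.extremePoints ℝ P) (hy : y₁ ≠ y₂)
    (huy₁ : dotp u y₁ = 0) (huy₂ : dotp u y₂ = 0) (hgy₁ : dotp g₁ y₁ = -1)
    (hgy₂ : dotp g₂ y₂ = -1) (hx : x ∈ P) (hux : dotp u x < 0) (hgx₁ : dotp g₁ x < 0)
    (hgx₂ : dotp g₂ x < 0) : dotp u x - dotp g₁ x - dotp g₂ x < 1 := by
  by_contra! hle
  have hg₂y₁ : dotp g₂ y₁ = 0 := hF.dotp_dual_eq_zero_of_one_le hP hdual hs hv₁ hv₂ hv hg₁ hg₂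
    hy₁ hy₂ hy huy₁ huy₂ hgy₁ hgy₂ hx hgx₁ hgx₂ hle
  have hg₁y₂ : dotp g₁ y₂ = 0 := hF.dotp_dual_eq_zero_of_one_le hP hdual hs hv₂ hv₁ hv.symm hg₂ hg₁
    hy₂ hy₁ hy.symm huy₂ huy₁ hgy₂ hgy₁ hx hgx₂ hgx₁ (by linarith)
  obtain ⟨G, hG, hE⟩ := hF.exists_isFacetNormal_sub_sub_and_extremePoints_eq hP hdual hs hv₁ hv₂ hv
    hg₁ hg₂ hy₁ hy₂ huy₁ huy₂ hgy₁ hgy₂ hg₁y₂ hg₂y₁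
  have hxG : x ∈ G :=
    hG.mem_iff.2 ⟨hx, (hG.dotp_le_one hx).antisymm (by rwa [dotp_sub_left, dotp_sub_left])⟩
  have vertices_nonneg : ∀ w ∈ Set.extremePoints ℝ G, 0 ≤ dotp u w := by
    rw [hE]
    rintro w (rfl | rfl | hw)
    · exact huy₂.ge
    · exact huy₁.ge
    · exact (hF.mem_extremePoints_iff.1 hw.1).2 ▸ zero_le_one
  obtain ⟨V, -, rfl⟩ := hP
  rw [← hG.convexHull_extremePoints V.finite_toSet] at hxG
  exact hux.not_ge (le_dotp_of_mem_convexHull vertices_nonneg hxG)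

end TwoNeighbors

/-- given distinct vertices `v₁, v₂` of a facet `F` whose neighboring vertices
`y₁ ≠ y₂` lie in `H(F,0)` with `⟨u_F^{v₁}, y₁⟩ = ⟨u_F^{v₂}, y₂⟩ = -1`, there is no vertex
`x` with `⟨u_F, x⟩ = -1` and `⟨u_F^{v₁}, x⟩ = ⟨u_F^{v₂}, x⟩ = -1`. -/
theorem stmt14 {d : ℕ} (P : Set (Fin d → ℝ)) (hP : IsReflexive P) (hs : IsSimplicial P)
    (F : Set (Fin d → ℝ)) (u : Fin d → ℝ) (hF : IsFacetNormal P F u)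
    (uv : (Fin d → ℝ) → (Fin d → ℝ))
    (huv : ∀ w ∈ Set.extremePoints ℝ F, dotp (uv w) w = 1 ∧
      ∀ w' ∈ Set.extremePoints ℝ F, w' ≠ w → dotp (uv w) w' = 0)
    (v₁ v₂ : Fin d → ℝ) (hv₁ : v₁ ∈ Set.extremePoints ℝ F)
    (hv₂ : v₂ ∈ Set.extremePoints ℝ F) (hvne : v₁ ≠ v₂)
    (y₁ y₂ : Fin d → ℝ) (hy₁ : NbrVertex P F v₁ y₁) (hy₂ : NbrVertex P F v₂ y₂)
    (hyne : y₁ ≠ y₂) (h01 : dotp u y₁ = 0) (h02 : dotp u y₂ = 0)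
    (hm1 : dotp (uv v₁) y₁ = -1) (hm2 : dotp (uv v₂) y₂ = -1) :
    ¬ ∃ x ∈ Set.extremePoints ℝ P,
      dotp u x = -1 ∧ dotp (uv v₁) x = -1 ∧ dotp (uv v₂) x = -1 := by
  rintro ⟨x, hx, hux, hgx₁, hgx₂⟩
  linarith [stmt14_general hP.1 hP.2.2 hs hF hv₁ hv₂ hvne (huv v₁ hv₁) (huv v₂ hv₂)
    hy₁.mem_extremePoints hy₂.mem_extremePoints hyne h01 h02 hm1 hm2 hx.1
    (by linarith) (by linarith) (by linarith)]
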